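/- Fix an integer p ≥ 2 and a real number α with 0 ≤ α ≤ p−1. Then the Hausdorff dimension of the set B(α) = {x ∈ [0,1] : M̲(x) = M̄(x) = α} equals h(α), where h is the p-adic entropy function. -/

import Mathlib

open Filter MeasureTheory Set
open scoped ENNReal

noncomputable section

/-- Number of words of length `n` over the alphabet `{0, …, p-1}` whose digit sum lies
strictly between `n(α-δ)` and `n(α+δ)`; this is `h(α,n,δ)`. -/
def hcount (p n : ℕ) (α δ : ℝ) : ℕ :=
  Nat.card {w : Fin n → Fin p //
    (n : ℝ) * (α - δ) < ∑ i, ((w i : ℕ) : ℝ) ∧ (∑ i, ((w i : ℕ) : ℝ)) < n * (α + δ)}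

/-- The `p`-adic entropy function
`h(α) = lim_{δ→0} limsup_{n→∞} log h(α,n,δ) / (n log p)`.
Since the inner quantity is nondecreasing in `δ`, the limit as `δ → 0⁺` equals the
infimum over `δ > 0`. -/
def entropy (p : ℕ) (α : ℝ) : ℝ :=
  ⨅ δ : {δ : ℝ // 0 < δ},
    limsup (fun n : ℕ => Real.log (hcount p n α δ) / (n * Real.log p)) atTop

/-- Number of words of length `n` over `{0, …, p-1}` with digit sum `< n(α+δ)`;
this is `h̄(α,n,δ)`. -/
def hbarCount (p n : ℕ) (α δ : ℝ) : ℕ :=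
  Nat.card {w : Fin n → Fin p // (∑ i, ((w i : ℕ) : ℝ)) < n * (α + δ)}

/-- The `p`-adic upper entropy function
`h̄(α) = lim_{δ→0} limsup_{n→∞} log h̄(α,n,δ) / (n log p)`, the limit in `δ`
being the infimum over `δ > 0` by monotonicity in `δ`. -/
def upperEntropy (p : ℕ) (α : ℝ) : ℝ :=
  ⨅ δ : {δ : ℝ // 0 < δ},
    limsup (fun n : ℕ => Real.log (hbarCount p n α δ) / (n * Real.log p)) atTop

/-- Number of words of length `n` over `{0, …, p-1}` with digit sum `> n(α-δ)`;
this is `h̲(α,n,δ)`. -/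
def hlowCount (p n : ℕ) (α δ : ℝ) : ℕ :=
  Nat.card {w : Fin n → Fin p // (n : ℝ) * (α - δ) < ∑ i, ((w i : ℕ) : ℝ)}

/-- The `p`-adic lower entropy function
`h̲(α) = lim_{δ→0} liminf_{n→∞} log h̲(α,n,δ) / (n log p)`, the limit in `δ`
being the infimum over `δ > 0` by monotonicity in `δ`. -/
def lowerEntropy (p : ℕ) (α : ℝ) : ℝ :=
  ⨅ δ : {δ : ℝ // 0 < δ},
    liminf (fun n : ℕ => Real.log (hlowCount p n α δ) / (n * Real.log p)) atTop

/-- The `(n+1)`-th digit `x_{n+1} ∈ {0,…,p-1}` of the non-terminating `p`-adic expansion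
`x = 0.x₁x₂x₃…` of `x ∈ [0,1]` (the expansion not ending in all zeros). -/
def padicDigit (p : ℕ) (x : ℝ) (n : ℕ) : ℤ :=
  (⌈x * p ^ (n + 1)⌉ - 1) - p * (⌈x * p ^ n⌉ - 1)

/-- `S_n(T^m x) = x_{m+1} + ⋯ + x_{m+n}`, the digit sum of length `n` after shifting
`m` times. In particular `msum p x 0 n = S_n(x)`. -/
def msum (p : ℕ) (x : ℝ) (m n : ℕ) : ℤ :=
  ∑ i ∈ Finset.range n, padicDigit p x (m + i)

/-- The `n`-th lower moving digit mean `M̲ₙ(x) = liminf_{m→∞} S_n(T^m x)/n`. -/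
def lowerMn (p : ℕ) (x : ℝ) (n : ℕ) : ℝ :=
  liminf (fun m : ℕ => (msum p x m n : ℝ) / n) atTop

/-- The `n`-th upper moving digit mean `M̄ₙ(x) = limsup_{m→∞} S_n(T^m x)/n`. -/
def upperMn (p : ℕ) (x : ℝ) (n : ℕ) : ℝ :=
  limsup (fun m : ℕ => (msum p x m n : ℝ) / n) atTop

/-- The lower moving digit mean `M̲(x) = lim_{n→∞} M̲ₙ(x)`; the limit exists by
subadditivity, hence equals the `liminf`. -/
def lowerM (p : ℕ) (x : ℝ) : ℝ := liminf (fun n : ℕ => lowerMn p x n) atTop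

/-- The upper moving digit mean `M̄(x) = lim_{n→∞} M̄ₙ(x)`; the limit exists by
subadditivity, hence equals the `limsup`. -/
def upperM (p : ℕ) (x : ℝ) : ℝ := limsup (fun n : ℕ => upperMn p x n) atTop

/-- The lower digit mean `A̲(x) = liminf_{n→∞} S_n(x)/n`. -/
def lowerA (p : ℕ) (x : ℝ) : ℝ := liminf (fun n : ℕ => (msum p x 0 n : ℝ) / n) atTop

/-- The upper digit mean `Ā(x) = limsup_{n→∞} S_n(x)/n`. -/
def upperA (p : ℕ) (x : ℝ) : ℝ := limsup (fun n : ℕ => (msum p x 0 n : ℝ) / n) atTop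

/-- The Banach set `B(α,β) = {x ∈ [0,1] : M̲(x) = α, M̄(x) = β}`. -/
def BanachSet (p : ℕ) (α β : ℝ) : Set ℝ :=
  {x | x ∈ Icc (0 : ℝ) 1 ∧ lowerM p x = α ∧ upperM p x = β}

theorem padicDigit_nonneg {p : ℕ} (hp : 2 ≤ p) (x : ℝ) (n : ℕ) : 0 ≤ padicDigit p x n := by
  have hp0 : (0 : ℝ) < p := by positivity
  have h : (p : ℤ) * (⌈x * p ^ n⌉ - 1) < ⌈x * p ^ (n + 1)⌉ := by
    rw [Int.lt_ceil]
    push_cast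
    have := Int.ceil_lt_add_one (x * p ^ n)
    rw [pow_succ]
    nlinarith
  unfold padicDigit
  lia

theorem padicDigit_lt {p : ℕ} (hp : 2 ≤ p) (x : ℝ) (n : ℕ) : padicDigit p x n < p := by
  have hp0 : (0 : ℝ) < p := by positivity
  have h : ⌈x * p ^ (n + 1)⌉ ≤ (p : ℤ) * ⌈x * p ^ n⌉ := by
    rw [Int.ceil_le]
    push_cast
    have := Int.le_ceil (x * p ^ n)
    rw [pow_succ]
    nlinarith
  unfold padicDigit
  linarith

theorem abs_padicDigit_le {p : ℕ} (hp : 2 ≤ p) (x : ℝ) (n : ℕ) : |(padicDigit p x n : ℝ)| ≤ p := by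
  have h0 : (0 : ℝ) ≤ padicDigit p x n := mod_cast padicDigit_nonneg hp x n
  have h1 : (padicDigit p x n : ℝ) < p := mod_cast padicDigit_lt hp x n
  rw [abs_of_nonneg h0]
  exact h1.le

theorem ceil_mul_pow_eq_of_padicDigit_eq {p : ℕ} {x y : ℝ} (h0 : ⌈x⌉ = ⌈y⌉) (N : ℕ)
    (h : ∀ i < N, padicDigit p x i = padicDigit p y i) : ⌈x * p ^ N⌉ = ⌈y * p ^ N⌉ := by
  induction N with
  | zero => simpa using h0
  | succ N ih =>
    have h1 := ih fun i hi => h i (by lia)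
    have h2 := h N (by lia)
    unfold padicDigit at h2
    rw [h1] at h2
    linarith

theorem abs_sub_le_of_padicDigit_eq {p : ℕ} (hp : 2 ≤ p) {x y : ℝ} (h0 : ⌈x⌉ = ⌈y⌉) (N : ℕ)
    (h : ∀ i < N, padicDigit p x i = padicDigit p y i) : |x - y| ≤ ((p : ℝ) ^ N)⁻¹ := by
  have hpN : (0 : ℝ) < (p : ℝ) ^ N := by positivity
  have h1 := ceil_mul_pow_eq_of_padicDigit_eq h0 N h
  have h2 := Int.le_ceil (x * p ^ N)
  have h3 := Int.ceil_lt_add_one (x * p ^ N)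
  have h4 := Int.le_ceil (y * p ^ N)
  have h5 := Int.ceil_lt_add_one (y * p ^ N)
  rw [h1] at h2 h3
  rw [← one_div, le_div_iff₀ hpN, ← abs_of_pos hpN, ← abs_mul, abs_le]
  constructor <;> linarith

theorem abs_msum_div_le {p : ℕ} (hp : 2 ≤ p) (x : ℝ) (m n : ℕ) :
    |(msum p x m n : ℝ) / n| ≤ p := by
  rw [abs_div, Nat.abs_cast]
  refine div_le_of_le_mul₀ (by positivity) (by positivity) ?_
  unfold msum
  push_cast
  refine (Finset.abs_sum_le_sum_abs _ _).trans ?_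
  refine (Finset.sum_le_sum fun i _ => abs_padicDigit_le hp x (m + i)).trans ?_
  simp [mul_comm]

theorem isBoundedUnder_le_of_abs_le {u : ℕ → ℝ} {C : ℝ} (h : ∀ n, |u n| ≤ C) :
    atTop.IsBoundedUnder (· ≤ ·) u :=
  isBoundedUnder_of ⟨C, fun n => (abs_le.1 (h n)).2⟩

theorem isBoundedUnder_ge_of_abs_le {u : ℕ → ℝ} {C : ℝ} (h : ∀ n, |u n| ≤ C) :
    atTop.IsBoundedUnder (· ≥ ·) u :=
  isBoundedUnder_of ⟨-C, fun n => (abs_le.1 (h n)).1⟩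

theorem limsup_mem_Icc {u : ℕ → ℝ} {a b : ℝ} (h : ∀ n, u n ∈ Icc a b) :
    limsup u atTop ∈ Icc a b := by
  have h1 : atTop.IsBoundedUnder (· ≤ ·) u := isBoundedUnder_of ⟨b, fun n => (h n).2⟩
  have h2 : atTop.IsBoundedUnder (· ≥ ·) u := isBoundedUnder_of ⟨a, fun n => (h n).1⟩
  exact ⟨(le_liminf_of_le h1.isCoboundedUnder_ge (Eventually.of_forall fun n => (h n).1)).trans
    (liminf_le_limsup h1 h2), limsup_le_of_le h2.isCoboundedUnder_le
    (Eventually.of_forall fun n => (h n).2)⟩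

theorem liminf_mem_Icc {u : ℕ → ℝ} {a b : ℝ} (h : ∀ n, u n ∈ Icc a b) :
    liminf u atTop ∈ Icc a b := by
  have h1 : atTop.IsBoundedUnder (· ≤ ·) u := isBoundedUnder_of ⟨b, fun n => (h n).2⟩
  have h2 : atTop.IsBoundedUnder (· ≥ ·) u := isBoundedUnder_of ⟨a, fun n => (h n).1⟩
  exact ⟨le_liminf_of_le h1.isCoboundedUnder_ge (Eventually.of_forall fun n => (h n).1),
    (liminf_le_limsup h1 h2).trans (limsup_mem_Icc h).2⟩

theorem abs_upperMn_le {p : ℕ} (hp : 2 ≤ p) (x : ℝ) (n : ℕ) : |upperMn p x n| ≤ p :=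
  abs_le.2 (limsup_mem_Icc fun m => abs_le.1 (abs_msum_div_le hp x m n))

theorem abs_lowerMn_le {p : ℕ} (hp : 2 ≤ p) (x : ℝ) (n : ℕ) : |lowerMn p x n| ≤ p :=
  abs_le.2 (liminf_mem_Icc fun m => abs_le.1 (abs_msum_div_le hp x m n))

/-- A bounded sequence whose blocks of length `n` eventually have nonpositive sums has partial
sums bounded above. -/
theorem exists_forall_sum_range_le {b : ℕ → ℝ} {P : ℝ} (hP : 0 ≤ P) (hb : ∀ i, b i ≤ P)
    {m₀ n : ℕ} (hn : 0 < n) (h : ∀ m ≥ m₀, ∑ i ∈ Finset.range n, b (m + i) ≤ 0) :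
    ∃ C, ∀ N, ∑ i ∈ Finset.range N, b i ≤ C := by
  refine ⟨(m₀ + n : ℕ) * P, fun N => ?_⟩
  induction N using Nat.strong_induction_on with
  | _ N ih =>
    rcases lt_or_ge N (m₀ + n) with hN | hN
    · refine (Finset.sum_le_sum fun i _ => hb i).trans ?_
      simp only [Finset.sum_const, Finset.card_range, nsmul_eq_mul]
      gcongr
    · obtain ⟨k, rfl⟩ := Nat.exists_eq_add_of_le' (show n ≤ N by lia)
      rw [Finset.sum_range_add]
      have h1 := ih k (by lia)
      have h2 := h k (by lia)
      linarith

theorem eventually_sum_range_lt {b : ℕ → ℝ} {P : ℝ} (hP : 0 ≤ P) (hb : ∀ i, b i ≤ P)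
    {m₀ n : ℕ} (hn : 0 < n) (h : ∀ m ≥ m₀, ∑ i ∈ Finset.range n, b (m + i) ≤ 0)
    {ε : ℝ} (hε : 0 < ε) : ∀ᶠ N : ℕ in atTop, ∑ i ∈ Finset.range N, b i < N * ε := by
  obtain ⟨C, hC⟩ := exists_forall_sum_range_le hP hb hn h
  have : Tendsto (fun N : ℕ => (N : ℝ) * ε) atTop atTop :=
    tendsto_natCast_atTop_atTop.atTop_mul_const hε
  filter_upwards [this.eventually_gt_atTop C] with N hN
  exact (hC N).trans_lt hN

theorem eventually_msum_lt {p : ℕ} (hp : 2 ≤ p) {x c : ℝ} (hx : upperM p x < c) :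
    ∀ᶠ N : ℕ in atTop, (msum p x 0 N : ℝ) < N * c := by
  obtain ⟨c', hc', hc⟩ := exists_between hx
  have h1 := eventually_lt_of_limsup_lt hc' (isBoundedUnder_le_of_abs_le (abs_upperMn_le hp x))
  obtain ⟨n, hn, hn0⟩ := (h1.and (eventually_gt_atTop 0)).exists
  have h2 := eventually_lt_of_limsup_lt hn
    (isBoundedUnder_le_of_abs_le fun m => abs_msum_div_le hp x m n)
  obtain ⟨m₀, hm₀⟩ := eventually_atTop.1 h2
  have hn' : (0 : ℝ) < n := mod_cast hn0
  have h3 := eventually_sum_range_lt (b := fun i => (padicDigit p x i : ℝ) - c') (P := p + |c'|)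
    (m₀ := m₀) (n := n) (by positivity)
    (fun i => by linarith [(abs_le.1 (abs_padicDigit_le hp x i)).2, neg_abs_le c']) hn0
    (fun m hm => by
      have := hm₀ m hm
      rw [div_lt_iff₀ hn'] at this
      simp only [msum, Int.cast_sum] at this
      simp only [Finset.sum_sub_distrib, Finset.sum_const, Finset.card_range, nsmul_eq_mul]
      linarith) (sub_pos.2 hc)
  filter_upwards [h3] with N hN
  simp only [Finset.sum_sub_distrib, Finset.sum_const, Finset.card_range, nsmul_eq_mul] at hN
  simp only [msum, Int.cast_sum, zero_add]
  linarith

theorem eventually_lt_msum {p : ℕ} (hp : 2 ≤ p) {x c : ℝ} (hx : c < lowerM p x) :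
    ∀ᶠ N : ℕ in atTop, (N : ℝ) * c < msum p x 0 N := by
  obtain ⟨c', hc, hc'⟩ := exists_between hx
  have h1 := eventually_lt_of_lt_liminf hc' (isBoundedUnder_ge_of_abs_le (abs_lowerMn_le hp x))
  obtain ⟨n, hn, hn0⟩ := (h1.and (eventually_gt_atTop 0)).exists
  have h2 := eventually_lt_of_lt_liminf hn
    (isBoundedUnder_ge_of_abs_le fun m => abs_msum_div_le hp x m n)
  obtain ⟨m₀, hm₀⟩ := eventually_atTop.1 h2
  have hn' : (0 : ℝ) < n := mod_cast hn0
  have h3 := eventually_sum_range_lt (b := fun i => c' - (padicDigit p x i : ℝ)) (P := p + |c'|)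
    (m₀ := m₀) (n := n) (by positivity)
    (fun i => by linarith [(abs_le.1 (abs_padicDigit_le hp x i)).1, le_abs_self c']) hn0
    (fun m hm => by
      have := hm₀ m hm
      rw [lt_div_iff₀ hn'] at this
      simp only [msum, Int.cast_sum] at this
      simp only [Finset.sum_sub_distrib, Finset.sum_const, Finset.card_range, nsmul_eq_mul]
      linarith) (sub_pos.2 hc)
  filter_upwards [h3] with N hN
  simp only [Finset.sum_sub_distrib, Finset.sum_const, Finset.card_range, nsmul_eq_mul] at hN
  simp only [msum, Int.cast_sum, zero_add]
  linarith

theorem lowerM_upperM_eq_of_abs_msum_sub_le {p : ℕ} {x α C : ℝ}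
    (h : ∀ m n, |(msum p x m n : ℝ) - n * α| ≤ C) : lowerM p x = α ∧ upperM p x = α := by
  have key : ∀ n : ℕ, 0 < n → ∀ m, (msum p x m n : ℝ) / n ∈ Icc (α - C / n) (α + C / n) := by
    intro n hn m
    have hn' : (0 : ℝ) < n := mod_cast hn
    have := abs_le.1 (h m n)
    constructor
    · rw [le_div_iff₀ hn', sub_mul, div_mul_cancel₀ _ hn'.ne']
      linarith
    · rw [div_le_iff₀ hn', add_mul, div_mul_cancel₀ _ hn'.ne']
      linarith
  have hC : Tendsto (fun n : ℕ => C / n) atTop (nhds 0) := tendsto_const_div_atTop_nhds_zero_nat C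
  have h1 : Tendsto (fun n : ℕ => α - C / n) atTop (nhds α) := by
    simpa using tendsto_const_nhds.sub hC
  have h2 : Tendsto (fun n : ℕ => α + C / n) atTop (nhds α) := by
    simpa using tendsto_const_nhds.add hC
  constructor
  · refine (tendsto_of_tendsto_of_tendsto_of_le_of_le' h1 h2 ?_ ?_).liminf_eq <;>
    filter_upwards [eventually_gt_atTop 0] with n hn
    exacts [(liminf_mem_Icc (key n hn)).1, (liminf_mem_Icc (key n hn)).2]
  · refine (tendsto_of_tendsto_of_tendsto_of_le_of_le' h1 h2 ?_ ?_).limsup_eq <;>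
    filter_upwards [eventually_gt_atTop 0] with n hn
    exacts [(limsup_mem_Icc (key n hn)).1, (limsup_mem_Icc (key n hn)).2]

theorem hcount_le_pow (p n : ℕ) (α δ : ℝ) : hcount p n α δ ≤ p ^ n := by
  refine (Nat.card_le_card_of_injective _ Subtype.val_injective).trans_eq ?_
  simp

theorem log_hcount_div_mem_Icc {p : ℕ} (hp : 2 ≤ p) (n : ℕ) (α δ : ℝ) :
    Real.log (hcount p n α δ) / (n * Real.log p) ∈ Icc (0 : ℝ) 1 := by
  have hp1 : (1 : ℝ) ≤ p := mod_cast (by lia : 1 ≤ p)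
  have hlog : 0 ≤ Real.log p := Real.log_nonneg hp1
  refine ⟨div_nonneg (Real.log_natCast_nonneg _) (by positivity), ?_⟩
  refine div_le_one_of_le₀ ?_ (by positivity)
  rcases Nat.eq_zero_or_pos (hcount p n α δ) with h | h
  · rw [h]
    simp only [Nat.cast_zero, Real.log_zero]
    positivity
  · rw [← Real.log_pow]
    exact Real.log_le_log (mod_cast h) (mod_cast hcount_le_pow p n α δ)

theorem limsup_log_hcount_nonneg {p : ℕ} (hp : 2 ≤ p) (α δ : ℝ) :
    0 ≤ limsup (fun n : ℕ => Real.log (hcount p n α δ) / (n * Real.log p)) atTop :=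
  (limsup_mem_Icc fun n => log_hcount_div_mem_Icc hp n α δ).1

theorem entropy_nonneg {p : ℕ} (hp : 2 ≤ p) (α : ℝ) : 0 ≤ entropy p α :=
  Real.iInf_nonneg fun δ => limsup_log_hcount_nonneg hp α δ

theorem entropy_le_limsup {p : ℕ} (hp : 2 ≤ p) (α : ℝ) {δ : ℝ} (hδ : 0 < δ) :
    entropy p α ≤ limsup (fun n : ℕ => Real.log (hcount p n α δ) / (n * Real.log p)) atTop :=
  ciInf_le (f := fun δ : {δ : ℝ // 0 < δ} =>
    limsup (fun n : ℕ => Real.log (hcount p n α δ) / (n * Real.log p)) atTop)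
    ⟨0, forall_mem_range.2 fun δ => limsup_log_hcount_nonneg hp α δ⟩ ⟨δ, hδ⟩

/-- Points of `(0,1]` whose digit averages of length at least `N₀` are `δ`-close to `α`. -/
def digitMeanNearSet (p : ℕ) (α δ : ℝ) (N₀ : ℕ) : Set ℝ :=
  {x | x ∈ Ioc (0 : ℝ) 1 ∧ ∀ N ≥ N₀,
    (N : ℝ) * (α - δ) < msum p x 0 N ∧ (msum p x 0 N : ℝ) < N * (α + δ)}

theorem BanachSet_diag_subset {p : ℕ} (hp : 2 ≤ p) (α : ℝ) {δ : ℝ} (hδ : 0 < δ) :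
    BanachSet p α α ⊆ {0} ∪ ⋃ N₀, digitMeanNearSet p α δ N₀ := by
  rintro x ⟨⟨hx0, hx1⟩, hl, hu⟩
  rcases hx0.eq_or_lt with rfl | hx0
  · exact Or.inl rfl
  · obtain ⟨N₀, hN₀⟩ := eventually_atTop.1
      ((eventually_lt_msum hp (c := α - δ) (by linarith)).and
        (eventually_msum_lt hp (c := α + δ) (by linarith)))
    exact Or.inr (mem_iUnion.2 ⟨N₀, ⟨hx0, hx1⟩, hN₀⟩)

/-- Points of `(0,1]` whose expansion starts with the word `w`. -/
def digitCylinder {p N : ℕ} (w : Fin N → Fin p) : Set ℝ :=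
  {x | x ∈ Ioc (0 : ℝ) 1 ∧ ∀ i : Fin N, padicDigit p x i = ((w i : ℕ) : ℤ)}

theorem ediam_digitCylinder_le {p N : ℕ} (hp : 2 ≤ p) (w : Fin N → Fin p) :
    Metric.ediam (digitCylinder w) ≤ ENNReal.ofReal (((p : ℝ) ^ N)⁻¹) := by
  refine Metric.ediam_le fun x hx y hy => ?_
  rw [edist_dist, Real.dist_eq]
  have hceil : ∀ z : ℝ, z ∈ Ioc (0 : ℝ) 1 → ⌈z⌉ = 1 := fun z hz =>
    Int.ceil_eq_iff.2 ⟨by simpa using hz.1, by simpa using hz.2⟩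
  refine ENNReal.ofReal_le_ofReal (abs_sub_le_of_padicDigit_eq hp ?_ N fun i hi => ?_)
  · rw [hceil x hx.1, hceil y hy.1]
  · exact (hx.2 ⟨i, hi⟩).trans (hy.2 ⟨i, hi⟩).symm

theorem digitMeanNearSet_subset {p : ℕ} (hp : 2 ≤ p) (α δ : ℝ) {N₀ N : ℕ} (hN : N₀ ≤ N) :
    digitMeanNearSet p α δ N₀ ⊆ ⋃ w : {w : Fin N → Fin p //
      (N : ℝ) * (α - δ) < ∑ i, ((w i : ℕ) : ℝ) ∧ (∑ i, ((w i : ℕ) : ℝ)) < N * (α + δ)},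
      digitCylinder w.1 := by
  rintro x ⟨hx, h⟩
  have hd : ∀ i, (((padicDigit p x i).toNat : ℕ) : ℤ) = padicDigit p x i := fun i =>
    Int.toNat_of_nonneg (padicDigit_nonneg hp x i)
  let w : Fin N → Fin p := fun i => ⟨(padicDigit p x i).toNat, by
    have := padicDigit_lt hp x i
    have := hd i
    lia⟩
  have hw : ∑ i, ((w i : ℕ) : ℝ) = msum p x 0 N := by
    rw [msum, Finset.sum_range]
    push_cast
    refine Finset.sum_congr rfl fun i _ => ?_
    have := hd i
    simp only [zero_add]
    exact_mod_cast this
  refine mem_iUnion.2 ⟨⟨w, ?_⟩, hx, fun i => (hd i).symm⟩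
  rw [hw]
  exact h N hN

theorem hausdorffMeasure_digitMeanNearSet_le {p : ℕ} (hp : 2 ≤ p) (α δ : ℝ) (N₀ : ℕ)
    {s : NNReal}
    (hs : limsup (fun n : ℕ => Real.log (hcount p n α δ) / (n * Real.log p)) atTop < s) :
    Measure.hausdorffMeasure (s : ℝ) (digitMeanNearSet p α δ N₀) ≤ 1 := by
  have hp1 : (1 : ℝ) < p := mod_cast (by lia : 1 < p)
  have hp0 : (0 : ℝ) < p := by linarith
  have hlog : 0 < Real.log p := Real.log_pos hp1
  have htend : Tendsto (fun N : ℕ => ENNReal.ofReal (((p : ℝ) ^ N)⁻¹)) atTop (nhds 0) := by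
    rw [← ENNReal.ofReal_zero]
    refine ENNReal.tendsto_ofReal ?_
    exact (tendsto_pow_atTop_atTop_of_one_lt hp1).inv_tendsto_atTop
  refine (Measure.hausdorffMeasure_le_liminf_sum (s : ℝ) _ _ htend
    (fun N (w : {w : Fin N → Fin p //
      (N : ℝ) * (α - δ) < ∑ i, ((w i : ℕ) : ℝ) ∧ (∑ i, ((w i : ℕ) : ℝ)) < N * (α + δ)}) =>
      digitCylinder w.1) (Eventually.of_forall fun N w => ediam_digitCylinder_le hp w.1)
    ((eventually_ge_atTop N₀).mono fun N hN => digitMeanNearSet_subset hp α δ hN)).trans ?_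
  refine liminf_le_of_frequently_le' (Eventually.frequently ?_)
  have hev := eventually_lt_of_limsup_lt hs
    (isBoundedUnder_of ⟨1, fun n => (log_hcount_div_mem_Icc hp n α δ).2⟩)
  filter_upwards [hev, eventually_gt_atTop 0] with N hN hN0
  have hN0' : (0 : ℝ) < N := mod_cast hN0
  refine (Finset.sum_le_sum fun w _ => ENNReal.rpow_le_rpow
    (ediam_digitCylinder_le hp w.1) s.2).trans ?_
  rw [Finset.sum_const, Finset.card_univ, ← Nat.card_eq_fintype_card, nsmul_eq_mul]
  change (hcount p N α δ : ℝ≥0∞) * _ ≤ 1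
  rw [ENNReal.ofReal_rpow_of_pos (by positivity), ← ENNReal.ofReal_natCast,
    ← ENNReal.ofReal_mul (by positivity), ENNReal.ofReal_le_one]
  rcases Nat.eq_zero_or_pos (hcount p N α δ) with h | h
  · simp [h]
  · have hc : (0 : ℝ) < hcount p N α δ := mod_cast h
    rw [div_lt_iff₀ (by positivity)] at hN
    rw [Real.inv_rpow (by positivity), ← div_eq_mul_inv, div_le_one (by positivity),
      ← Real.log_le_log_iff hc (by positivity), Real.log_rpow (by positivity), Real.log_pow]
    exact hN.le

theorem dimH_BanachSet_diag_le {p : ℕ} (hp : 2 ≤ p) (α : ℝ) {δ : ℝ} (hδ : 0 < δ) :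
    (dimH (BanachSet p α α)).toReal ≤
      limsup (fun n : ℕ => Real.log (hcount p n α δ) / (n * Real.log p)) atTop := by
  refine le_of_forall_gt_imp_ge_of_dense fun s hs => ?_
  lift s to NNReal using (limsup_log_hcount_nonneg hp α δ).trans hs.le
  refine ENNReal.toReal_le_coe_of_le_coe ?_
  refine (dimH_mono (BanachSet_diag_subset hp α hδ)).trans ?_
  rw [dimH_union, dimH_singleton, dimH_iUnion]
  refine max_le bot_le (iSup_le fun N₀ => dimH_le_of_hausdorffMeasure_ne_top ?_)
  exact ne_top_of_le_ne_top ENNReal.one_ne_top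
    (hausdorffMeasure_digitMeanNearSet_le hp α δ N₀ hs)

theorem dimH_BanachSet_diag_le_entropy {p : ℕ} (hp : 2 ≤ p) (α : ℝ) :
    (dimH (BanachSet p α α)).toReal ≤ entropy p α :=
  have : Nonempty {δ : ℝ // 0 < δ} := ⟨⟨1, one_pos⟩⟩
  le_ciInf fun δ => dimH_BanachSet_diag_le hp α δ.2

theorem sum_pow_le_one_add {p : ℕ} {g : Fin p → ℕ} {d₀ : Fin p} (hg : ∀ d ≠ d₀, 1 ≤ g d) {y : ℝ}
    (hy0 : 0 < y) (hy1 : y ≤ 1) : ∑ d, y ^ g d ≤ 1 + p * y := by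
  calc ∑ d, y ^ g d ≤ ∑ d, ((if d = d₀ then 1 else 0) + y) := by
        refine Finset.sum_le_sum fun d _ => ?_
        split_ifs with h
        · linarith [pow_le_one₀ (n := g d) hy0.le hy1]
        · rw [zero_add]
          exact pow_le_of_le_one hy0.le hy1 (Nat.one_le_iff_ne_zero.1 (hg d h))
    _ = 1 + p * y := by simp [Finset.sum_add_distrib]

/-- Chernoff bound for the number of words of small weight. -/
theorem log_hcount_le_of_weight {p : ℕ} {α δ : ℝ} (hδ : 0 < δ) {g : Fin p → ℕ} {d₀ : Fin p}
    (hg : ∀ d ≠ d₀, 1 ≤ g d)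
    (h : ∀ (n : ℕ) (w : Fin n → Fin p), (n : ℝ) * (α - δ) < ∑ i, ((w i : ℕ) : ℝ) →
      (∑ i, ((w i : ℕ) : ℝ)) < n * (α + δ) → ∑ i, (g (w i) : ℝ) < n * δ)
    {y : ℝ} (hy0 : 0 < y) (hy1 : y ≤ 1) (n : ℕ) :
    Real.log (hcount p n α δ) ≤ n * (p * y - δ * Real.log y) := by
  have hlogy : Real.log y ≤ 0 := Real.log_nonpos hy0.le hy1
  rcases Nat.eq_zero_or_pos (hcount p n α δ) with h0 | h0
  · rw [h0, Nat.cast_zero, Real.log_zero]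
    have : 0 ≤ -(δ * Real.log y) := by nlinarith
    have : 0 ≤ p * y := by positivity
    exact mul_nonneg (by positivity) (by linarith)
  have h0' : (0 : ℝ) < hcount p n α δ := mod_cast h0
  have key : (hcount p n α δ : ℝ) * y ^ (n * δ) ≤ (1 + p * y) ^ n := by
    calc (hcount p n α δ : ℝ) * y ^ (n * δ)
        = ∑ w : {w : Fin n → Fin p // (n : ℝ) * (α - δ) < ∑ i, ((w i : ℕ) : ℝ) ∧
            (∑ i, ((w i : ℕ) : ℝ)) < n * (α + δ)}, y ^ (n * δ) := by
          rw [Finset.sum_const, Finset.card_univ, ← Nat.card_eq_fintype_card, nsmul_eq_mul]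
          rfl
      _ ≤ ∑ w : {w : Fin n → Fin p // (n : ℝ) * (α - δ) < ∑ i, ((w i : ℕ) : ℝ) ∧
            (∑ i, ((w i : ℕ) : ℝ)) < n * (α + δ)}, ∏ i, y ^ g (w.1 i) := by
          refine Finset.sum_le_sum fun w _ => ?_
          rw [Finset.prod_pow_eq_pow_sum, ← Real.rpow_natCast]
          refine Real.rpow_le_rpow_of_exponent_ge hy0 hy1 ?_
          push_cast
          exact (h n w.1 w.2.1 w.2.2).le
      _ ≤ ∑ w : Fin n → Fin p, ∏ i, y ^ g (w i) := by
          refine (Finset.sum_map _ (Function.Embedding.subtype _)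
            fun w : Fin n → Fin p => ∏ i, y ^ g (w i)).symm.trans_le ?_
          exact Finset.sum_le_univ_sum_of_nonneg fun w => by positivity
      _ = (∑ d, y ^ g d) ^ n := by
          rw [Finset.sum_pow', Fintype.piFinset_univ]
      _ ≤ (1 + p * y) ^ n := by
          gcongr
          exact sum_pow_le_one_add hg hy0 hy1
  have h1 := Real.log_le_log (by positivity) key
  rw [Real.log_mul h0'.ne' (by positivity), Real.log_rpow hy0, Real.log_pow] at h1
  have h2 : Real.log (1 + p * y) ≤ p * y := by
    linarith [Real.log_le_sub_one_of_pos (show 0 < 1 + p * y by positivity)]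
  have h3 : n * Real.log (1 + p * y) ≤ n * (p * y) := by gcongr
  linarith

theorem entropy_eq_zero_of_weight {p : ℕ} (hp : 2 ≤ p) {α : ℝ} {g : Fin p → ℕ} {d₀ : Fin p}
    (hg : ∀ d ≠ d₀, 1 ≤ g d)
    (h : ∀ (δ : ℝ) (n : ℕ) (w : Fin n → Fin p), (n : ℝ) * (α - δ) < ∑ i, ((w i : ℕ) : ℝ) →
      (∑ i, ((w i : ℕ) : ℝ)) < n * (α + δ) → ∑ i, (g (w i) : ℝ) < n * δ) :
    entropy p α = 0 := by
  have hlog : 0 < Real.log p := Real.log_pos (mod_cast (by lia : 1 < p))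
  have key : ∀ y : ℝ, 0 < y → y ≤ 1 → ∀ δ : ℝ, 0 < δ →
      entropy p α ≤ (p * y - δ * Real.log y) / Real.log p := by
    intro y hy0 hy1 δ hδ
    refine (entropy_le_limsup hp α hδ).trans (limsup_le_of_le
      (isBoundedUnder_of ⟨0, fun n => (log_hcount_div_mem_Icc hp n α δ).1⟩).isCoboundedUnder_le ?_)
    filter_upwards [eventually_gt_atTop 0] with n hn
    have hn' : (0 : ℝ) < n := mod_cast hn
    rw [div_le_div_iff₀ (by positivity) hlog]
    have := mul_le_mul_of_nonneg_right (log_hcount_le_of_weight hδ hg (h δ) hy0 hy1 n) hlog.le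
    linarith
  have key2 : ∀ y : ℝ, 0 < y → y ≤ 1 → entropy p α ≤ (p * y) / Real.log p := by
    intro y hy0 hy1
    have ht : Tendsto (fun δ : ℝ => (p * y - δ * Real.log y) / Real.log p) (nhdsWithin 0 (Ioi 0))
        (nhds ((p * y - 0 * Real.log y) / Real.log p)) :=
      tendsto_nhdsWithin_of_tendsto_nhds (Continuous.tendsto (by fun_prop) _)
    rw [zero_mul, sub_zero] at ht
    exact ge_of_tendsto ht (eventually_mem_nhdsWithin.mono fun δ hδ => key y hy0 hy1 δ hδ)
  refine le_antisymm ?_ (entropy_nonneg hp α)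
  have ht : Tendsto (fun y : ℝ => (p * y) / Real.log p) (nhdsWithin 0 (Ioi 0))
      (nhds ((p * 0) / Real.log p)) :=
    tendsto_nhdsWithin_of_tendsto_nhds (Continuous.tendsto (by fun_prop) _)
  rw [mul_zero, zero_div] at ht
  refine ge_of_tendsto ht ?_
  filter_upwards [Ioc_mem_nhdsGT (zero_lt_one' ℝ)] with y hy using key2 y hy.1 hy.2

theorem entropy_zero {p : ℕ} (hp : 2 ≤ p) : entropy p 0 = 0 := by
  refine entropy_eq_zero_of_weight hp (g := fun d => d) (d₀ := ⟨0, by lia⟩)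
    (fun d hd => Nat.one_le_iff_ne_zero.2 fun h => hd (Fin.ext h)) fun δ n w _ h => ?_
  simpa using h

theorem entropy_sub_one {p : ℕ} (hp : 2 ≤ p) : entropy p ((p : ℝ) - 1) = 0 := by
  refine entropy_eq_zero_of_weight hp (g := fun d => p - 1 - d) (d₀ := ⟨p - 1, by lia⟩)
    (fun d hd => ?_) fun δ n w h _ => ?_
  · have : (d : ℕ) ≠ p - 1 := fun h => hd (Fin.ext h)
    lia
  · have : ∀ i, ((p - 1 - w i : ℕ) : ℝ) = p - 1 - (w i : ℕ) := fun i => by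
      rw [Nat.cast_sub (by lia), Nat.cast_sub (by lia), Nat.cast_one]
    simp only [this, Finset.sum_sub_distrib, Finset.sum_const, Finset.card_univ, Fintype.card_fin,
      nsmul_eq_mul]
    linarith

/-- The integer `a₀⋯aₙ₋₁` in base `p`. -/
def digitPrefix {p : ℕ} (a : ℕ → Fin p) : ℕ → ℤ
  | 0 => 0
  | n + 1 => p * digitPrefix a n + (a n : ℕ)

theorem ofDigits_mul_pow {p : ℕ} (a : ℕ → Fin p) (n : ℕ) :
    Real.ofDigits a * p ^ n = digitPrefix a n + Real.ofDigits fun i => a (i + n) := by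
  have hp : (p : ℝ) ≠ 0 := mod_cast (Fin.pos (a 0)).ne'
  induction n with
  | zero => simp [digitPrefix]
  | succ n ih =>
    have h := Real.ofDigits_eq_sum_add_ofDigits (fun i => a (i + n)) 1
    simp only [Finset.sum_range_one, Real.ofDigitsTerm, zero_add, pow_one] at h
    rw [pow_succ, ← mul_assoc, ih, h, digitPrefix]
    push_cast
    simp only [add_assoc, add_comm 1 n]
    field_simp

theorem ofDigits_pos {p : ℕ} {a : ℕ → Fin p} {j : ℕ} (hj : (a j : ℕ) ≠ 0) :
    0 < Real.ofDigits a := by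
  have hp : (0 : ℝ) < p := mod_cast Fin.pos (a 0)
  have hj' : (0 : ℝ) < (a j : ℕ) := mod_cast Nat.pos_of_ne_zero hj
  exact Real.summable_ofDigitsTerm.tsum_pos (fun _ => Real.ofDigitsTerm_nonneg) j
    (mul_pos hj' (by positivity))

theorem padicDigit_ofDigits {p : ℕ} {a : ℕ → Fin p} (ha : ∀ m, ∃ j ≥ m, (a j : ℕ) ≠ 0) (n : ℕ) :
    padicDigit p (Real.ofDigits a) n = (a n : ℕ) := by
  have hceil : ∀ m, ⌈Real.ofDigits a * p ^ m⌉ = digitPrefix a m + 1 := by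
    intro m
    obtain ⟨j, hj, hj0⟩ := ha m
    rw [ofDigits_mul_pow, Int.ceil_eq_iff]
    have h1 : 0 < Real.ofDigits fun i => a (i + m) :=
      ofDigits_pos (j := j - m) (by rwa [Nat.sub_add_cancel hj])
    have h2 := Real.ofDigits_le_one fun i => a (i + m)
    push_cast
    constructor <;> linarith
  rw [padicDigit, hceil, hceil, digitPrefix]
  ring

theorem digitPrefix_succ_eq_iff {p : ℕ} {a b : ℕ → Fin p} {n : ℕ} :
    digitPrefix a (n + 1) = digitPrefix b (n + 1) ↔
      digitPrefix a n = digitPrefix b n ∧ a n = b n := by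
  refine ⟨fun h => ?_, fun ⟨h1, h2⟩ => by rw [digitPrefix, digitPrefix, h1, h2]⟩
  have ha := (a n).2
  have hb := (b n).2
  simp only [digitPrefix] at h
  have h1 : digitPrefix a n = digitPrefix b n := by
    rcases lt_trichotomy (digitPrefix a n) (digitPrefix b n) with h' | h' | h'
    · nlinarith
    · exact h'
    · nlinarith
  rw [h1] at h
  exact ⟨h1, Fin.ext (by lia)⟩

theorem digitPrefix_ne {p : ℕ} {a b : ℕ → Fin p} {i j : ℕ} (hij : i < j) (h : a i ≠ b i) :
    digitPrefix a j ≠ digitPrefix b j := by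
  induction j, hij using Nat.le_induction with
  | base => exact fun h' => h (digitPrefix_succ_eq_iff.1 h').2
  | succ j _ ih => exact fun h' => ih (digitPrefix_succ_eq_iff.1 h').1

/-- Expansions which differ at some place and agree at a later place `j` are separated by at least
`p ^ (-(j + 1))`. -/
theorem inv_pow_le_abs_ofDigits_sub {p : ℕ} (hp : 2 ≤ p) {a b : ℕ → Fin p} {i j : ℕ}
    (hij : i < j) (hi : a i ≠ b i) (hj : a j = b j) :
    ((p : ℝ) ^ (j + 1))⁻¹ ≤ |Real.ofDigits a - Real.ofDigits b| := by
  have hpj : (0 : ℝ) < (p : ℝ) ^ (j + 1) := by positivity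
  rw [← one_div, div_le_iff₀ hpj, ← abs_of_pos hpj, ← abs_mul, sub_mul,
    ofDigits_mul_pow, ofDigits_mul_pow]
  have h1 : (1 : ℤ) ≤ |digitPrefix a j - digitPrefix b j| :=
    Int.one_le_abs (sub_ne_zero.2 (digitPrefix_ne hij hi))
  have h2 : (2 : ℤ) ≤ |digitPrefix a (j + 1) - digitPrefix b (j + 1)| := by
    rw [digitPrefix, digitPrefix, hj, add_sub_add_right_eq_sub, ← mul_sub, abs_mul, Nat.abs_cast]
    nlinarith
  have h3 : (2 : ℝ) ≤ |(digitPrefix a (j + 1) : ℝ) - digitPrefix b (j + 1)| := mod_cast h2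
  have ha0 := Real.ofDigits_nonneg fun i => a (i + (j + 1))
  have ha1 := Real.ofDigits_le_one fun i => a (i + (j + 1))
  have hb0 := Real.ofDigits_nonneg fun i => b (i + (j + 1))
  have hb1 := Real.ofDigits_le_one fun i => b (i + (j + 1))
  rcases le_abs.1 h3 with h | h
  · exact le_abs.2 (Or.inl (by linarith))
  · exact le_abs.2 (Or.inr (by linarith))

theorem ofDigits_mem_BanachSet {p : ℕ} {α C : ℝ} (hα : 0 < α) {a : ℕ → Fin p}
    (h : ∀ m : ℕ, |∑ i ∈ Finset.range m, (((a i : ℕ) : ℝ) - α)| ≤ C) :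
    Real.ofDigits a ∈ BanachSet p α α := by
  have hblock : ∀ m n : ℕ, |∑ i ∈ Finset.range n, (((a (m + i) : ℕ) : ℝ) - α)| ≤ C + C := by
    intro m n
    have h1 := Finset.sum_range_add (fun i => ((a i : ℕ) : ℝ) - α) m n
    rw [← sub_eq_iff_eq_add'] at h1
    rw [← h1]
    exact (abs_sub _ _).trans (add_le_add (h _) (h _))
  have ha : ∀ m, ∃ j ≥ m, (a j : ℕ) ≠ 0 := by
    intro m
    by_contra! h0
    obtain ⟨n, hn⟩ := exists_nat_gt ((C + C) / α)
    have h1 := hblock m n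
    rw [Finset.sum_congr rfl fun i _ => by rw [h0 (m + i) (by lia)]] at h1
    simp only [Nat.cast_zero, zero_sub, Finset.sum_neg_distrib, Finset.sum_const,
      Finset.card_range, nsmul_eq_mul, abs_neg] at h1
    rw [div_lt_iff₀ hα] at hn
    linarith [le_abs_self (n * α)]
  refine ⟨⟨Real.ofDigits_nonneg a, Real.ofDigits_le_one a⟩,
    lowerM_upperM_eq_of_abs_msum_sub_le (C := C + C) fun m n => ?_⟩
  convert hblock m n using 2
  simp [msum, padicDigit_ofDigits ha]

/-- Lower bound for the dimension of a Cantor-type set parametrized by sequences over `M` symbols,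
in which sequences first differing at `q` are separated by `b ^ (-(q + 1))`. -/
theorem log_le_dimH_range_mul {M : ℕ} {b : ℝ} (hb : 1 < b) (x : (ℕ → Fin M) → ℝ)
    (hsep : ∀ ω ω' q, (∀ i < q, ω i = ω' i) → ω q ≠ ω' q → (b ^ (q + 1))⁻¹ ≤ |x ω - x ω'|) :
    Real.log M ≤ (dimH (range x)).toReal * Real.log b := by
  have hlogb : 0 < Real.log b := Real.log_pos hb
  have hb0 : 0 < b := by linarith
  rcases le_or_gt M 1 with hM | hM
  · rw [Real.log_nonpos_iff (by positivity) |>.2 (mod_cast hM) |>.antisymm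
      (Real.log_natCast_nonneg M)]
    positivity
  have hM1 : (1 : ℝ) < M := mod_cast hM
  have hM0 : (0 : ℝ) < M := by linarith
  have : NeZero M := ⟨by lia⟩
  have hfirst : ∀ ω ω' : ℕ → Fin M, ω ≠ ω' → ∃ q, (∀ i < q, ω i = ω' i) ∧ ω q ≠ ω' q := by
    intro ω ω' h
    have hne := Function.ne_iff.1 h
    classical
    exact ⟨Nat.find hne, fun i hi => not_not.1 (Nat.find_min hne hi), Nat.find_spec hne⟩
  have hinj : Function.Injective x := by
    intro ω ω' h
    by_contra hne
    obtain ⟨q, hq, hq'⟩ := hfirst ω ω' hne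
    have h1 := hsep ω ω' q hq hq'
    rw [h, sub_self, abs_zero] at h1
    have : 0 < (b ^ (q + 1))⁻¹ := by positivity
    linarith
  have hr0 : 0 < Real.log M / Real.log b := div_pos (Real.log_pos hM1) hlogb
  have hbr : b ^ (Real.log M / Real.log b) = M := by
    rw [Real.rpow_def_of_pos hb0, mul_div_cancel₀ _ hlogb.ne', Real.exp_log hM0]
  obtain ⟨r, hr⟩ : ∃ r : NNReal, (r : ℝ) = Real.log M / Real.log b := ⟨⟨_, hr0.le⟩, rfl⟩
  rw [← hr] at hr0 hbr
  set f : ℝ → ℝ := fun t => Real.ofDigits (Function.invFun x t) with hf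
  have hfx : ∀ ω, f (x ω) = Real.ofDigits ω := fun ω => by
    rw [hf]
    simp only [Function.leftInverse_invFun hinj ω]
  have hhol : HolderOnWith (M : NNReal) r f (range x) := by
    rintro _ ⟨ω, rfl⟩ _ ⟨ω', rfl⟩
    rcases eq_or_ne ω ω' with rfl | hne
    · simp
    obtain ⟨q, hq, hq'⟩ := hfirst ω ω' hne
    rw [hfx, hfx, edist_dist, edist_dist, Real.dist_eq, Real.dist_eq,
      ENNReal.ofReal_rpow_of_nonneg (abs_nonneg _) r.coe_nonneg, ENNReal.coe_natCast,
      ← ENNReal.ofReal_natCast, ← ENNReal.ofReal_mul hM0.le]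
    refine ENNReal.ofReal_le_ofReal ((Real.abs_ofDigits_sub_ofDigits_le hq).trans ?_)
    calc ((M : ℝ) ^ q)⁻¹ = M * ((b ^ (q + 1))⁻¹) ^ (r : ℝ) := by
          rw [Real.inv_rpow (by positivity), ← Real.rpow_natCast b, ← Real.rpow_mul hb0.le,
            mul_comm _ (r : ℝ), Real.rpow_mul hb0.le, hbr, Real.rpow_natCast, pow_succ]
          field_simp
      _ ≤ M * |x ω - x ω'| ^ (r : ℝ) := by
          gcongr
          exact hsep ω ω' q hq hq'
  have himage : Icc (0 : ℝ) 1 ⊆ f '' range x := by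
    intro t ht
    obtain ⟨ω, -, hω⟩ := Real.ofDigits_SurjOn hM ht
    exact ⟨x ω, ⟨ω, rfl⟩, (hfx ω).trans hω⟩
  have h1 : (1 : ℝ≥0∞) ≤ dimH (range x) / r := by
    refine le_trans ?_ ((dimH_mono himage).trans (hhol.dimH_image_le (mod_cast hr0)))
    rw [Real.dimH_of_nonempty_interior (by simp)]
    simp
  have h2 : (r : ℝ≥0∞) ≤ dimH (range x) := by
    have := ENNReal.mul_le_of_le_div h1
    rwa [one_mul] at this
  have h3 := ENNReal.toReal_mono (Real.dimH_ne_top _) h2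
  rw [ENNReal.coe_toReal, hr, div_le_iff₀ hlogb] at h3
  exact h3

/-- Constant filler blocks of length `K` can be chosen among `0⋯0` and `(p-1)⋯(p-1)` so as to keep
the accumulated discrepancy bounded. -/
theorem exists_filler {p : ℕ} (hp : 2 ≤ p) {K : ℕ} {α t : ℝ} (hα : 0 ≤ α)
    (hα' : α ≤ (p : ℝ) - 1) (h₀ : |t| ≤ K * α) (h₁ : |t| ≤ K * (p - 1 - α)) :
    ∃ c : ℕ → Fin p, ∀ q, |∑ j ∈ Finset.range q, (t + K * (((c j : ℕ) : ℝ) - α))| ≤ 2 * K * p := by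
  let d : ℝ → Fin p := fun D => if 0 ≤ D then ⟨0, by lia⟩ else ⟨p - 1, by lia⟩
  let D : ℕ → ℝ := fun q => Nat.rec 0 (fun _ D => D + (t + K * (((d D : ℕ) : ℝ) - α))) q
  have hD : ∀ q, D (q + 1) = D q + (t + K * (((d (D q) : ℕ) : ℝ) - α)) := fun q => rfl
  have hK : (0 : ℝ) ≤ K := Nat.cast_nonneg K
  refine ⟨fun q => d (D q), fun q => ?_⟩
  have hsum : ∑ j ∈ Finset.range q, (t + K * (((d (D j) : ℕ) : ℝ) - α)) = D q := by
    induction q with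
    | zero => rfl
    | succ q ih => rw [Finset.sum_range_succ, ih, hD]
  rw [hsum]
  clear hsum
  obtain ⟨h₀l, h₀u⟩ := abs_le.1 h₀
  obtain ⟨h₁l, h₁u⟩ := abs_le.1 h₁
  induction q with
  | zero => simpa [D] using (by positivity : (0 : ℝ) ≤ 2 * K * p)
  | succ q ih =>
    rw [abs_le] at ih ⊢
    rw [hD]
    have h2 : K * α ≤ K * p := by gcongr; linarith
    have h3 : K * (p - 1 - α) ≤ K * p := by gcongr; linarith
    rcases le_or_gt 0 (D q) with h | h
    · have hd : ((d (D q) : ℕ) : ℝ) = 0 := by simp [d, h]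
      rw [hd]
      constructor <;> linarith
    · have hd : ((d (D q) : ℕ) : ℝ) = p - 1 := by
        simp only [d, h.not_ge, if_false]
        rw [Nat.cast_sub (by lia), Nat.cast_one]
      rw [hd]
      constructor <;> linarith

/-- The digit sequence alternating the words `w q` with constant fillers of length `K` with
digit `c q`. -/
def interleaveDigits {p n : ℕ} (K : ℕ) (w : ℕ → Fin n → Fin p) (c : ℕ → Fin p) (m : ℕ) : Fin p :=
  if h : m % (n + K) < n then w (m / (n + K)) ⟨m % (n + K), h⟩ else c (m / (n + K))

theorem interleaveDigits_word {p n K : ℕ} (w : ℕ → Fin n → Fin p) (c : ℕ → Fin p) (q : ℕ)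
    (i : Fin n) : interleaveDigits K w c (q * (n + K) + i) = w q i := by
  have hi := i.2
  have h1 : (q * (n + K) + i) % (n + K) = i := by
    rw [mul_comm, Nat.mul_add_mod, Nat.mod_eq_of_lt (by lia)]
  have h2 : (q * (n + K) + i) / (n + K) = q := by
    rw [mul_comm, Nat.mul_add_div (by lia), Nat.div_eq_of_lt (by lia), add_zero]
  simp [interleaveDigits, h1, h2]

theorem interleaveDigits_filler {p n K : ℕ} (w : ℕ → Fin n → Fin p) (c : ℕ → Fin p) (q : ℕ)
    {i : ℕ} (hi : i < K) : interleaveDigits K w c (q * (n + K) + (n + i)) = c q := by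
  have h1 : (q * (n + K) + (n + i)) % (n + K) = n + i := by
    rw [mul_comm, Nat.mul_add_mod, Nat.mod_eq_of_lt (by lia)]
  have h2 : (q * (n + K) + (n + i)) / (n + K) = q := by
    rw [mul_comm, Nat.mul_add_div (by lia), Nat.div_eq_of_lt (by lia), add_zero]
  simp [interleaveDigits, h1, h2]

theorem sum_interleaveDigits {p n K : ℕ} {w : ℕ → Fin n → Fin p} {c : ℕ → Fin p} {σ : ℕ}
    (hw : ∀ q, ∑ i, (w q i : ℕ) = σ) (α : ℝ) (q : ℕ) :
    ∑ i ∈ Finset.range (q * (n + K)), (((interleaveDigits K w c i : ℕ) : ℝ) - α) =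
      ∑ j ∈ Finset.range q, ((σ - n * α) + K * (((c j : ℕ) : ℝ) - α)) := by
  induction q with
  | zero => simp
  | succ q ih =>
    rw [add_mul, one_mul, Finset.sum_range_add, ih, Finset.sum_range_succ, Finset.sum_range_add]
    congr 2
    · rw [Finset.sum_range, ← hw q]
      simp [interleaveDigits_word]
    · rw [Finset.sum_congr rfl fun i hi => by
        rw [interleaveDigits_filler w c q (Finset.mem_range.1 hi)]]
      simp [mul_sub]

theorem abs_sum_interleaveDigits_le {p n K : ℕ} {w : ℕ → Fin n → Fin p} {c : ℕ → Fin p} {σ : ℕ}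
    (hw : ∀ q, ∑ i, (w q i : ℕ) = σ) {α C : ℝ} (hα : 0 ≤ α) (hα' : α ≤ p)
    (hc : ∀ q, |∑ j ∈ Finset.range q, ((σ - n * α) + K * (((c j : ℕ) : ℝ) - α))| ≤ C)
    (hK : 0 < K) (m : ℕ) :
    |∑ i ∈ Finset.range m, (((interleaveDigits K w c i : ℕ) : ℝ) - α)| ≤ C + (n + K : ℕ) * p := by
  have hm : m = m / (n + K) * (n + K) + m % (n + K) := by rw [mul_comm, Nat.div_add_mod]
  have hlt : m % (n + K) < n + K := Nat.mod_lt _ (by lia)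
  generalize m / (n + K) = q at hm
  generalize m % (n + K) = r at hm hlt
  rw [hm, Finset.sum_range_add, sum_interleaveDigits hw]
  refine (abs_add_le _ _).trans (add_le_add (hc q) ?_)
  refine (Finset.abs_sum_le_sum_abs _ _).trans ?_
  refine (Finset.sum_le_sum fun i _ => (?_ : _ ≤ (p : ℝ))).trans ?_
  · have := (interleaveDigits K w c (q * (n + K) + i)).2
    have h1 : ((interleaveDigits K w c (q * (n + K) + i) : ℕ) : ℝ) ≤ p := mod_cast this.le
    exact abs_le.2 ⟨by linarith [(interleaveDigits K w c (q * (n + K) + i) : ℕ).cast_nonneg (α := ℝ)],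
      by linarith⟩
  · simp only [Finset.sum_const, Finset.card_range, nsmul_eq_mul]
    gcongr

/-- The number of words of length `n` with a prescribed digit sum bounds the dimension of `B(α)`
from below, provided that the deviation can be compensated by fillers of length `K`. -/
theorem log_card_le_dimH_mul {p : ℕ} (hp : 2 ≤ p) {α : ℝ} (hα : 0 < α) (hα' : α ≤ (p : ℝ) - 1)
    {n K σ : ℕ} (hK : 0 < K) (h₀ : |(σ : ℝ) - n * α| ≤ K * α)
    (h₁ : |(σ : ℝ) - n * α| ≤ K * (p - 1 - α)) :
    Real.log (Nat.card {w : Fin n → Fin p // ∑ i, (w i : ℕ) = σ}) ≤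
      (dimH (BanachSet p α α)).toReal * ((n + K) * Real.log p) := by
  have hp1 : (1 : ℝ) < p := mod_cast (by lia : 1 < p)
  obtain ⟨c, hc⟩ := exists_filler hp hα.le hα' h₀ h₁
  set W := {w : Fin n → Fin p // ∑ i, (w i : ℕ) = σ}
  let e : Fin (Nat.card W) ≃ W := (Finite.equivFin W).symm
  let a : (ℕ → Fin (Nat.card W)) → ℕ → Fin p := fun ω => interleaveDigits K (fun q => (e (ω q)).1) c
  have hsub : (range fun ω => Real.ofDigits (a ω)) ⊆ BanachSet p α α := by
    rintro _ ⟨ω, rfl⟩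
    exact ofDigits_mem_BanachSet hα
      (abs_sum_interleaveDigits_le (fun q => (e (ω q)).2) hα.le (by linarith) hc hK)
  have hlog := log_le_dimH_range_mul (b := (p : ℝ) ^ (n + K)) (one_lt_pow₀ hp1 (by lia))
    (fun ω => Real.ofDigits (a ω)) fun ω ω' q _ hq => by
      have hne : (e (ω q)).1 ≠ (e (ω' q)).1 := fun h => hq (e.injective (Subtype.ext h))
      obtain ⟨i, hi⟩ := Function.ne_iff.1 hne
      refine le_trans ?_ (inv_pow_le_abs_ofDigits_sub hp (i := q * (n + K) + i)
        (j := q * (n + K) + (n + 0)) (by have := i.2; lia) ?_ ?_)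
      · rw [← pow_mul]
        gcongr
        · exact hp1.le
        · lia
      · simpa only [a, interleaveDigits_word] using hi
      · simp only [a, interleaveDigits_filler _ c q hK]
  rw [Real.log_pow] at hlog
  refine hlog.trans ?_
  push_cast
  have : 0 ≤ Real.log p := Real.log_nonneg hp1.le
  gcongr
  · exact Real.dimH_ne_top _

theorem hcount_le_mul_card {p : ℕ} (hp : 2 ≤ p) {n : ℕ} (hn : 0 < n) {α δ : ℝ}
    (h : 0 < hcount p n α δ) : ∃ σ : ℕ, |(σ : ℝ) - n * α| ≤ n * δ ∧
      0 < Nat.card {w : Fin n → Fin p // ∑ i, (w i : ℕ) = σ} ∧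
      hcount p n α δ ≤ n * p * Nat.card {w : Fin n → Fin p // ∑ i, (w i : ℕ) = σ} := by
  classical
  set s : Finset (Fin n → Fin p) := Finset.univ.filter fun w =>
    (n : ℝ) * (α - δ) < ∑ i, ((w i : ℕ) : ℝ) ∧ (∑ i, ((w i : ℕ) : ℝ)) < n * (α + δ)
  have hs : hcount p n α δ = s.card := by
    rw [hcount, Nat.card_eq_fintype_card, Fintype.card_subtype]
  rw [hs] at h ⊢
  have : Nonempty (Fin n) := ⟨⟨0, hn⟩⟩
  have hmaps : ∀ w ∈ s, ∑ i, (w i : ℕ) ∈ Finset.range (n * p) := fun w _ => by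
    rw [Finset.mem_range]
    refine (Finset.sum_lt_sum_of_nonempty Finset.univ_nonempty fun i _ => (w i).2).trans_eq ?_
    simp
  have hne : (Finset.range (n * p)).Nonempty := Finset.nonempty_range_iff.2 (by positivity)
  obtain ⟨σ, -, hσ⟩ := Finset.exists_le_card_fiber_of_nsmul_le_card_of_maps_to (M := ℚ) hmaps hne
    (b := (s.card : ℚ) / (n * p)) (by
      rw [Finset.card_range, nsmul_eq_mul]
      push_cast
      rw [mul_div_cancel₀]
      positivity)
  have hnp : (0 : ℚ) < n * p := by positivity
  rw [div_le_iff₀ hnp] at hσ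
  have hσ' : s.card ≤ (s.filter fun w => ∑ i, (w i : ℕ) = σ).card * (n * p) := mod_cast hσ
  have hpos : 0 < (s.filter fun w => ∑ i, (w i : ℕ) = σ).card :=
    Nat.pos_of_ne_zero fun h0 => by rw [h0] at hσ'; lia
  have hle : (s.filter fun w => ∑ i, (w i : ℕ) = σ).card ≤
      Nat.card {w : Fin n → Fin p // ∑ i, (w i : ℕ) = σ} := by
    rw [Nat.card_eq_fintype_card, Fintype.card_subtype]
    exact Finset.card_le_card (Finset.filter_subset_filter _ (Finset.subset_univ _))
  refine ⟨σ, ?_, hpos.trans_le hle, hσ'.trans ?_⟩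
  · obtain ⟨w, hw⟩ := Finset.card_pos.1 hpos
    obtain ⟨hws, rfl⟩ := Finset.mem_filter.1 hw
    obtain ⟨h1, h2⟩ := (Finset.mem_filter.1 hws).2
    push_cast
    rw [abs_le]
    constructor <;> linarith
  · rw [mul_comm]
    gcongr

theorem log_hcount_le_dimH {p : ℕ} (hp : 2 ≤ p) {α κ δ : ℝ} (hκ : 0 < κ) (hα : κ ≤ α)
    (hα' : κ ≤ (p : ℝ) - 1 - α) (hδ : 0 < δ) {n : ℕ} (hn : 0 < n) :
    Real.log (hcount p n α δ) ≤ Real.log (n * p) +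
      (dimH (BanachSet p α α)).toReal * ((n + (n * δ / κ + 1)) * Real.log p) := by
  have hp1 : (1 : ℝ) < p := mod_cast (by lia : 1 < p)
  have hlog : 0 ≤ Real.log p := Real.log_nonneg hp1.le
  have hn1 : (1 : ℝ) ≤ n := mod_cast hn
  rcases Nat.eq_zero_or_pos (hcount p n α δ) with h0 | h0
  · rw [h0, Nat.cast_zero, Real.log_zero]
    have : 0 ≤ Real.log (n * p) := Real.log_nonneg (by nlinarith)
    positivity
  obtain ⟨σ, hσ, hW, hle⟩ := hcount_le_mul_card hp hn h0
  set K := ⌈n * δ / κ⌉₊ with hKdef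
  have hK : 0 < K := Nat.ceil_pos.2 (by positivity)
  have hK1 : n * δ ≤ K * κ := by
    rw [← div_le_iff₀ hκ]
    exact Nat.le_ceil _
  have hK2 : (K : ℝ) ≤ n * δ / κ + 1 := (Nat.ceil_lt_add_one (by positivity)).le
  have h1 := log_card_le_dimH_mul hp (hκ.trans_le hα) (by linarith) hK
    (hσ.trans (hK1.trans (by gcongr))) (hσ.trans (hK1.trans (by gcongr)))
  have hW' : (0 : ℝ) < Nat.card {w : Fin n → Fin p // ∑ i, (w i : ℕ) = σ} := mod_cast hW
  have hle' : (hcount p n α δ : ℝ) ≤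
      n * p * Nat.card {w : Fin n → Fin p // ∑ i, (w i : ℕ) = σ} := mod_cast hle
  have h2 := Real.log_le_log (mod_cast h0) hle'
  rw [Real.log_mul (by positivity) hW'.ne'] at h2
  refine h2.trans (add_le_add_right (h1.trans ?_) _)
  gcongr

theorem entropy_le_dimH_of_lt {p : ℕ} (hp : 2 ≤ p) {α κ δ : ℝ} (hκ : 0 < κ) (hα : κ ≤ α)
    (hα' : κ ≤ (p : ℝ) - 1 - α) (hδ : 0 < δ) :
    entropy p α ≤ (dimH (BanachSet p α α)).toReal * (1 + δ / κ) := by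
  set d := (dimH (BanachSet p α α)).toReal
  have hp1 : (1 : ℝ) < p := mod_cast (by lia : 1 < p)
  have hlog : 0 < Real.log p := Real.log_pos hp1
  let v : ℕ → ℝ := fun n => Real.log (n * p) / n / Real.log p + d * (1 + δ / κ + 1 / n)
  have hv : Tendsto v atTop (nhds (0 / Real.log p + d * (1 + δ / κ + 0))) := by
    refine Tendsto.add (Tendsto.div_const ?_ _)
      ((tendsto_const_nhds.add tendsto_one_div_atTop_nhds_zero_nat).const_mul _)
    have h1 : Tendsto (fun x : ℝ => Real.log x / x) atTop (nhds 0) := by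
      simpa using Real.isLittleO_log_id_atTop.tendsto_div_nhds_zero
    have h2 : Tendsto (fun n : ℕ => (n : ℝ) * p) atTop atTop :=
      tendsto_natCast_atTop_atTop.atTop_mul_const (by positivity)
    have h3 := (h1.comp h2).mul_const (p : ℝ)
    rw [zero_mul] at h3
    refine h3.congr fun n => ?_
    simp only [Function.comp]
    field_simp
  rw [zero_div, zero_add, add_zero] at hv
  refine (entropy_le_limsup hp α hδ).trans ?_
  rw [← hv.limsup_eq]
  refine limsup_le_limsup ?_
    (isBoundedUnder_of ⟨0, fun n => (log_hcount_div_mem_Icc hp n α δ).1⟩).isCoboundedUnder_le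
    hv.isBoundedUnder_le
  filter_upwards [eventually_gt_atTop 0] with n hn
  have hn' : (0 : ℝ) < n := mod_cast hn
  rw [div_le_iff₀ (by positivity)]
  refine (log_hcount_le_dimH hp hκ hα hα' hδ hn).trans_eq ?_
  simp only [v]
  field_simp
  ring

theorem entropy_le_dimH_BanachSet {p : ℕ} (hp : 2 ≤ p) {α : ℝ} (hα : 0 ≤ α)
    (hα' : α ≤ (p : ℝ) - 1) : entropy p α ≤ (dimH (BanachSet p α α)).toReal := by
  rcases hα.eq_or_lt with rfl | hα
  · rw [entropy_zero hp]
    exact ENNReal.toReal_nonneg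
  rcases hα'.eq_or_lt with rfl | hα'
  · rw [entropy_sub_one hp]
    exact ENNReal.toReal_nonneg
  set κ := min α (p - 1 - α)
  have hκ : 0 < κ := lt_min hα (by linarith)
  have ht : Tendsto (fun δ : ℝ => (dimH (BanachSet p α α)).toReal * (1 + δ / κ))
      (nhdsWithin 0 (Ioi 0)) (nhds ((dimH (BanachSet p α α)).toReal * (1 + 0 / κ))) :=
    tendsto_nhdsWithin_of_tendsto_nhds (Continuous.tendsto (by fun_prop) _)
  rw [zero_div, add_zero, mul_one] at ht
  exact ge_of_tendsto ht (eventually_mem_nhdsWithin.mono fun δ hδ =>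
    entropy_le_dimH_of_lt hp hκ (min_le_left _ _) (min_le_right _ _) hδ)

/-- For an integer `p ≥ 2` and a real `0 ≤ α ≤ p-1`, the Hausdorff
dimension of `B(α) = B(α,α) = {x ∈ [0,1] : M̲(x) = M̄(x) = α}` equals `h(α)`. -/
theorem dimH_BanachSet_diag (p : ℕ) (hp : 2 ≤ p) (α : ℝ)
    (hα : 0 ≤ α) (hα' : α ≤ (p : ℝ) - 1) :
    dimH (BanachSet p α α) = ENNReal.ofReal (entropy p α) := by
  rw [← (dimH_BanachSet_diag_le_entropy hp α).antisymm (entropy_le_dimH_BanachSet hp hα hα'),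
    ENNReal.ofReal_toReal (Real.dimH_ne_top _)]
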